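/- Let Γ be a terminal DG game and let (u,c) ∈ E be a move with c ∈ T such that c is the ≻_{i(u)}-worst element of T, and suppose u has at least one other outgoing move (out-degree of u is at least 2). Let Γ' be the DG game obtained from Γ by deleting the single move (u,c). Then every terminal Nash equilibrium of Γ' is also a terminal Nash equilibrium of Γ. -/

import Mathlib

/-!
Deleting `(u,c)` changes neither the terminals (as `u` keeps another move) nor the outcome of any
fixed choice function, so the only deviations in `Γ` that need attention are those using the deleted
move at `u`; they belong to the owner of `u`, because the equilibrium `σ` itself does not use it.
If the deviating play visits `u`, it ends in `c`, which is the worst terminal for that player and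
hence no improvement on the terminal outcome of `σ`. Otherwise the choice at `u` does not affect the
play: resetting it to `σ u` gives a deviation in `Γ'` with the same outcome
(`outcome_update_of_not_visited`), which is no improvement since `σ` is an equilibrium of `Γ'`.
-/

open Classical

/-- A deterministic graphical (DG) game on vertex (position) set `V` with player set `ι`.
`adj` is the move relation of the digraph; terminals are exactly the vertices of
out-degree `0`.  `owner x` is the player controlling position `x` (irrelevant for
terminals), `init` is the initial position, and `pref i x y` means that player `i`
strictly prefers outcome `x` to outcome `y`, where outcomes are encoded as
`Option V`: `some t` for a terminal `t` and `none` for the infinite outcome `∞`. -/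
structure DGGame (V : Type*) (ι : Type*) where
  adj : V → V → Prop
  owner : V → ι
  init : V
  pref : ι → Option V → Option V → Prop

namespace DGGame

variable {V ι : Type*} (Γ : DGGame V ι)

/-- A terminal position: no outgoing moves. -/
def Terminal (x : V) : Prop := ∀ y, ¬ Γ.adj x y

/-- The set of outcomes `A = T ∪ {∞}`. -/
def OutcomeSet : Set (Option V) := {x | x = none ∨ ∃ t, Γ.Terminal t ∧ x = some t}

/-- The preferences of each player form a strict linear order on the outcome set. -/
def PrefOrder : Prop :=
  ∀ i : ι,
    (∀ x ∈ Γ.OutcomeSet, ¬ Γ.pref i x x) ∧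
    (∀ x ∈ Γ.OutcomeSet, ∀ y ∈ Γ.OutcomeSet, ∀ z ∈ Γ.OutcomeSet,
        Γ.pref i x y → Γ.pref i y z → Γ.pref i x z) ∧
    (∀ x ∈ Γ.OutcomeSet, ∀ y ∈ Γ.OutcomeSet, x ≠ y → Γ.pref i x y ∨ Γ.pref i y x)

/-- One step of the play determined by a situation `σ` (stays put at terminals). -/
noncomputable def step (σ : V → V) (x : V) : V :=
  if Γ.Terminal x then x else σ x

/-- The position reached after `n` moves of the play starting at the initial position. -/
noncomputable def iter (σ : V → V) (n : ℕ) : V := (Γ.step σ)^[n] Γ.init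

/-- The outcome `g(σ)` of a situation: the terminal at which the play from the initial
position ends, or `none` (i.e. `∞`) if the play is infinite. -/
noncomputable def outcome (σ : V → V) : Option V :=
  if h : ∃ n, Γ.Terminal (Γ.iter σ n) then some (Γ.iter σ (Nat.find h)) else none

/-- A situation: a choice, for every non-terminal position, of a move from it.
(Values at terminal positions are irrelevant.) -/
def IsSituation (σ : V → V) : Prop := ∀ x, ¬ Γ.Terminal x → Γ.adj x (σ x)

/-- Nash equilibrium in pure stationary strategies: no player `i` can obtain a strictly
better outcome by changing his own moves only. -/
def IsNE (σ : V → V) : Prop :=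
  Γ.IsSituation σ ∧
  ∀ (i : ι) (σ' : V → V), Γ.IsSituation σ' →
    (∀ x, Γ.owner x ≠ i → σ' x = σ x) →
    ¬ Γ.pref i (Γ.outcome σ') (Γ.outcome σ)

/-- A terminal Nash equilibrium: a NE whose outcome is a terminal. -/
def IsTerminalNE (σ : V → V) : Prop := Γ.IsNE σ ∧ ∃ t, Γ.outcome σ = some t

/-- A non-terminal Nash equilibrium: a NE whose outcome is `∞`. -/
def IsNonterminalNE (σ : V → V) : Prop := Γ.IsNE σ ∧ Γ.outcome σ = none

/-- A terminal DG game: every player prefers every terminal outcome to `∞`. -/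
def TerminalGame : Prop := ∀ (i : ι) (t : V), Γ.Terminal t → Γ.pref i (some t) none

/-- A play-once DG game: every player controls exactly one position. -/
def PlayOnce : Prop := ∀ i : ι, {x | ¬ Γ.Terminal x ∧ Γ.owner x = i}.ncard = 1

/-- Reachability by a directed path. -/
def Reaches (x y : V) : Prop := Relation.ReflTransGen Γ.adj x y

end DGGame

namespace DGGame

variable {V ι : Type*}

theorem iter_succ (Γ : DGGame V ι) (σ : V → V) (n : ℕ) :
    Γ.iter σ (n + 1) = Γ.step σ (Γ.iter σ n) := by
  simp only [iter, Function.iterate_succ_apply']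

/-- The play stays put once it has reached a terminal. -/
theorem iter_add_of_terminal (Γ : DGGame V ι) (σ : V → V) {n : ℕ}
    (h : Γ.Terminal (Γ.iter σ n)) (k : ℕ) : Γ.iter σ (n + k) = Γ.iter σ n := by
  induction k with
  | zero => rfl
  | succ k ih => rw [← Nat.add_assoc, iter_succ, ih, step, if_pos h]

theorem outcome_of_terminal (Γ : DGGame V ι) (σ : V → V) {n : ℕ}
    (h : Γ.Terminal (Γ.iter σ n)) : Γ.outcome σ = some (Γ.iter σ n) := by
  have hex : ∃ n, Γ.Terminal (Γ.iter σ n) := ⟨n, h⟩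
  rw [outcome, dif_pos hex]
  obtain ⟨k, hk⟩ := Nat.exists_eq_add_of_le (Nat.find_min' hex h)
  have := iter_add_of_terminal Γ σ (Nat.find_spec hex) k
  rw [← hk] at this
  rw [this]

theorem terminal_of_outcome (Γ : DGGame V ι) (σ : V → V) {t : V}
    (h : Γ.outcome σ = some t) : Γ.Terminal t := by
  by_cases hex : ∃ n, Γ.Terminal (Γ.iter σ n)
  · obtain ⟨n, hn⟩ := hex
    rw [outcome_of_terminal Γ σ hn] at h
    exact Option.some.inj h ▸ hn
  · rw [outcome, dif_neg hex] at h
    cases h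

/-- The outcome depends only on the play and on the set of terminals. -/
theorem outcome_congr (Γ Γ' : DGGame V ι) (σ σ' : V → V)
    (hT : ∀ x, Γ.Terminal x ↔ Γ'.Terminal x) (hi : ∀ n, Γ.iter σ n = Γ'.iter σ' n) :
    Γ.outcome σ = Γ'.outcome σ' := by
  by_cases hex : ∃ n, Γ.Terminal (Γ.iter σ n)
  · obtain ⟨n, hn⟩ := hex
    have hn' : Γ'.Terminal (Γ'.iter σ' n) := by rw [← hi, ← hT]; exact hn
    rw [outcome_of_terminal Γ σ hn, outcome_of_terminal Γ' σ' hn', hi]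
  · have hex' : ¬ ∃ n, Γ'.Terminal (Γ'.iter σ' n) := by
      rintro ⟨n, hn⟩
      exact hex ⟨n, by rw [hi, hT]; exact hn⟩
    rw [outcome, outcome, dif_neg hex, dif_neg hex']

/-- Games with the same initial position and the same terminals assign the same outcome to
every choice function. -/
theorem outcome_eq_of_terminal_iff (Γ Γ' : DGGame V ι) (σ : V → V)
    (hinit : Γ.init = Γ'.init) (hT : ∀ x, Γ.Terminal x ↔ Γ'.Terminal x) :
    Γ.outcome σ = Γ'.outcome σ := by
  refine outcome_congr Γ Γ' σ σ hT fun n => ?_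
  induction n with
  | zero => exact hinit
  | succ n ih => rw [iter_succ, iter_succ, ih, step, step]; simp only [hT]

theorem outcome_update_of_not_visited (Γ : DGGame V ι) (σ : V → V) (u y : V)
    (hu : ∀ n, Γ.iter σ n ≠ u) : Γ.outcome (Function.update σ u y) = Γ.outcome σ := by
  refine outcome_congr Γ Γ _ _ (fun _ => Iff.rfl) fun n => ?_
  induction n with
  | zero => rfl
  | succ n ih =>
    rw [iter_succ, iter_succ, ih, step, step, Function.update_of_ne (hu n)]

end DGGame

open DGGame

/-- Let `Γ` be a terminal DG game and `(u,c) ∈ E` a move with `c` a terminal that is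
the `≻_{i(u)}`-worst element of `T`, where `u` has at least one other outgoing move.
Let `Γ'` be obtained from `Γ` by deleting the single move `(u,c)`.  Then every
terminal Nash equilibrium of `Γ'` is also a terminal Nash equilibrium of `Γ`. -/
theorem stmt9 {V ι : Type*} [Finite V] (Γ : DGGame V ι)
    (hinit : ¬ Γ.Terminal Γ.init) (hpref : Γ.PrefOrder)
    (hterm : Γ.TerminalGame)
    (u c : V) (hmove : Γ.adj u c) (hct : Γ.Terminal c)
    (hworst : ∀ b, Γ.Terminal b → b ≠ c → Γ.pref (Γ.owner u) (some b) (some c))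
    (hdeg2 : ∃ y, y ≠ c ∧ Γ.adj u y)
    (Γ' : DGGame V ι)
    (hΓ' : Γ' = { Γ with adj := fun x y => Γ.adj x y ∧ ¬ (x = u ∧ y = c) }) :
    ∀ σ : V → V, Γ'.IsTerminalNE σ → Γ.IsTerminalNE σ := by
  have hadj : ∀ x y, Γ'.adj x y ↔ Γ.adj x y ∧ ¬ (x = u ∧ y = c) := by
    subst hΓ'; exact fun _ _ => Iff.rfl
  have hown : Γ'.owner = Γ.owner := by subst hΓ'; rfl
  have hprf : Γ'.pref = Γ.pref := by subst hΓ'; rfl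
  have hin : Γ.init = Γ'.init := by subst hΓ'; rfl
  have hT : ∀ x, Γ.Terminal x ↔ Γ'.Terminal x := by
    intro x
    refine ⟨fun h y hy => h y ((hadj x y).1 hy).1, fun h y hy => ?_⟩
    by_cases hx : x = u
    · obtain ⟨z, hzc, hz⟩ := hdeg2
      exact h z ((hadj x z).2 ⟨hx ▸ hz, fun hh => hzc hh.2⟩)
    · exact h y ((hadj x y).2 ⟨hy, fun hh => hx hh.1⟩)
  have hout : ∀ σ, Γ.outcome σ = Γ'.outcome σ := fun σ =>
    outcome_eq_of_terminal_iff Γ Γ' σ hin hT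
  have hu : ¬ Γ.Terminal u := fun h => h c hmove
  rintro σ ⟨⟨hsit, hne⟩, t, ht⟩
  rw [← hout] at ht
  have htT : Γ.Terminal t := terminal_of_outcome Γ σ ht
  refine ⟨⟨fun x hx => ((hadj _ _).1 (hsit x (by rwa [← hT]))).1, ?_⟩, t, ht⟩
  intro i τ hτ hτσ hbetter
  have hσu : σ u ≠ c := fun h => ((hadj _ _).1 (hsit u (by rwa [← hT]))).2 ⟨rfl, h⟩
  rw [hown, hprf] at hne
  by_cases hτu : τ u = c
  · have hi : Γ.owner u = i := by
      by_contra h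
      exact hσu ((hτσ u h) ▸ hτu)
    by_cases hvis : ∃ n, Γ.iter τ n = u
    · obtain ⟨n, hn⟩ := hvis
      have hn1 : Γ.iter τ (n + 1) = c := by
        rw [iter_succ, hn, step, if_neg hu, hτu]
      have hc := outcome_of_terminal Γ τ (n := n + 1) (by rwa [hn1])
      rw [hc, hn1, ht] at hbetter
      obtain ⟨hirr, htr, -⟩ := hpref i
      have hcO : some c ∈ Γ.OutcomeSet := Or.inr ⟨c, hct, rfl⟩
      have htO : some t ∈ Γ.OutcomeSet := Or.inr ⟨t, htT, rfl⟩
      by_cases htc : t = c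
      · rw [htc] at hbetter
        exact hirr _ hcO hbetter
      · exact hirr _ hcO (htr _ hcO _ htO _ hcO hbetter (hi ▸ hworst t htT htc))
    · push Not at hvis
      refine hne i (Function.update τ u (σ u)) ?_ ?_ ?_
      · intro x hx
        by_cases hxu : x = u
        · subst hxu
          rw [Function.update_self]
          exact hsit x hx
        · rw [Function.update_of_ne hxu]
          exact (hadj _ _).2 ⟨hτ x (by rwa [hT]), fun h => hxu h.1⟩
      · intro x hx
        rw [Function.update_of_ne (fun h : x = u => hx (by rw [h, hi]))]
        exact hτσ x hx
      · rw [← hout, ← hout, outcome_update_of_not_visited Γ τ u (σ u) hvis]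
        exact hbetter
  · refine hne i τ (fun x hx => (hadj _ _).2 ⟨hτ x (by rwa [hT]), ?_⟩) hτσ ?_
    · rintro ⟨rfl, h⟩
      exact hτu h
    · rw [← hout, ← hout]
      exact hbetter
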